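/- Let R be a Noetherian local ring and T an indeterminate. Then R satisfies (SAC) if and only if the power series ring R[[T]] satisfies (SAC). -/

import Mathlib

open CategoryTheory

/-- The `i`-th Ext group of `R`-modules `M` and `N`. -/
noncomputable abbrev ExtGroup (R : Type) [CommRing R] (M N : ModuleCat.{0} R) (i : ℕ) : Type :=
  (((Ext R (ModuleCat.{0} R) i).obj (Opposite.op M)).obj N)

/-- The symmetric Auslander condition (SAC): for every finitely generated `R`-module `M`,
if `Ext^i(M,R) = 0` for all `i > 0` and `Ext^i(M,M) = 0` for `i ≫ 0`,
then `Ext^i(M,M) = 0` for all `i > 0`. -/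
def SAC (R : Type) [CommRing R] : Prop :=
  ∀ M : ModuleCat.{0} R, Module.Finite R M →
    (∀ i : ℕ, 0 < i → Subsingleton (ExtGroup R M (ModuleCat.of R R) i)) →
    (∃ N : ℕ, ∀ i : ℕ, N < i → Subsingleton (ExtGroup R M M i)) →
    ∀ i : ℕ, 0 < i → Subsingleton (ExtGroup R M M i)

/-- A projective resolution, given by plain linear maps. -/
structure Res (A : Type) [CommRing A] (M : Type) [AddCommGroup M] [Module A M] where
  P : ℕ → Type
  [acg : ∀ n, AddCommGroup (P n)]
  [mod : ∀ n, Module A (P n)]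
  proj : ∀ n, Module.Projective A (P n)
  d : ∀ n, P (n + 1) →ₗ[A] P n
  ε : P 0 →ₗ[A] M
  ex : ∀ n, Function.Exact (d (n + 1)) (d n)
  ex0 : Function.Exact (d 0) ε
  surj : Function.Surjective ε

attribute [instance] Res.acg Res.mod

/-- Vanishing of cohomology of `Hom(-, N)` at the middle spot. -/
def EV {A P0 P1 P2 : Type} [CommRing A] [AddCommGroup P0] [AddCommGroup P1] [AddCommGroup P2]
    [Module A P0] [Module A P1] [Module A P2] (d1 : P1 →ₗ[A] P0) (d2 : P2 →ₗ[A] P1)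
    (N : Type) [AddCommGroup N] [Module A N] : Prop :=
  ∀ f : P1 →ₗ[A] N, f ∘ₗ d2 = 0 → ∃ g : P0 →ₗ[A] N, f = g ∘ₗ d1

namespace Res
variable {A : Type} [CommRing A] {M : Type} [AddCommGroup M] [Module A M] (r : Res A M)

lemma dd (n : ℕ) : r.d n ∘ₗ r.d (n + 1) = 0 := (r.ex n).linearMap_comp_eq_zero

/-- The associated chain complex. -/
noncomputable def cpx : ChainComplex (ModuleCat.{0} A) ℕ :=
  ChainComplex.of (fun n => ModuleCat.of A (r.P n)) (fun n => ModuleCat.ofHom (r.d n)) (by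
    intro n
    rw [← ModuleCat.ofHom_comp, r.dd]; rfl)

lemma cpx_d (n : ℕ) : r.cpx.d (n + 1) n = ModuleCat.ofHom (r.d n) := by
  simp only [cpx]
  exact ChainComplex.of_d _ _ _

/-- The augmentation. -/
noncomputable def aug : r.cpx.X 0 ⟶ ModuleCat.of A M := ModuleCat.ofHom r.ε

lemma d_aug : r.cpx.d 1 0 ≫ r.aug = 0 := by
  rw [cpx_d]
  exact (ModuleCat.ofHom_comp _ _).symm.trans (by rw [r.ex0.linearMap_comp_eq_zero]; rfl)

/-- The associated projective resolution. -/
noncomputable def pres : ProjectiveResolution (ModuleCat.of A M) where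
  complex := r.cpx
  projective n := by
    have := r.proj n
    exact (IsProjective.iff_projective (R := A) (P := r.P n)).1 this
  π := (ChainComplex.toSingle₀Equiv _ _).symm ⟨r.aug, r.d_aug⟩
  quasiIso := ⟨fun n => by
    cases n
    · rw [ChainComplex.quasiIsoAt₀_iff, ShortComplex.quasiIso_iff_of_zeros']
      · have e1 : (ShortComplex.mk _ _ r.d_aug).Exact := by
          rw [ShortComplex.moduleCat_exact_iff]
          simp only [cpx_d]
          intro x hx
          exact (r.ex0 x).1 hx
        have e2 : Epi r.aug := (ModuleCat.epi_iff_surjective _).2 r.surj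
        refine (ShortComplex.exact_and_epi_g_iff_of_iso ?_).2
          ⟨e1, e2⟩
        exact ShortComplex.isoMk (Iso.refl _) (Iso.refl _) (Iso.refl _)
          ((Category.id_comp (r.cpx.d 1 0)).trans (Category.comp_id (r.cpx.d 1 0)).symm)
          (by simp; exact (Category.id_comp r.aug).trans (Category.comp_id r.aug).symm)
      all_goals rfl
    · rename_i n
      rw [quasiIsoAt_iff_exactAt']
      · rw [HomologicalComplex.exactAt_iff' _ (n + 2) (n + 1) n (by simp only [ChainComplex.prev]; rfl) (by simp)]
        rw [ShortComplex.moduleCat_exact_iff]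
        simp only [HomologicalComplex.shortComplexFunctor'_obj_f, HomologicalComplex.shortComplexFunctor'_obj_g, HomologicalComplex.sc', cpx_d]
        intro x hx
        exact (r.ex n x).1 hx
      · apply ChainComplex.exactAt_succ_single_obj⟩

lemma ext_iff (N : ModuleCat.{0} A) (i : ℕ) :
    Subsingleton (ExtGroup A (ModuleCat.of A M) N (i + 1)) ↔ EV (r.d i) (r.d (i + 1)) N := by
  have h1 : Subsingleton (ExtGroup A (ModuleCat.of A M) N (i + 1)) ↔
      Subsingleton ((r.pres.complex.linearYonedaObj A N).homology (i + 1)) := 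
    (r.pres.isoExt (R := A) (i + 1) N).toLinearEquiv.toEquiv.subsingleton_congr
  rw [h1, ← ModuleCat.isZero_iff_subsingleton, ← HomologicalComplex.exactAt_iff_isZero_homology,
    HomologicalComplex.exactAt_iff' _ i (i + 1) (i + 2) (by simp) (by simp),
    ShortComplex.moduleCat_exact_iff]
  have hd : ∀ n, r.pres.complex.d (n + 1) n = ModuleCat.ofHom (r.d n) := r.cpx_d
  constructor
  · intro h f hf
    obtain ⟨g, hg⟩ := h (ModuleCat.ofHom f : ModuleCat.of A (r.P (i+1)) ⟶ N) (by
      change r.pres.complex.d (i + 2) (i + 1) ≫ ModuleCat.ofHom f = 0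
      rw [hd]
      exact (ModuleCat.ofHom_comp _ _).symm.trans (by rw [hf]; rfl))
    change r.pres.complex.d (i + 1) i ≫ g = ModuleCat.ofHom f at hg
    rw [hd] at hg
    exact ⟨ModuleCat.Hom.hom g, (congrArg ModuleCat.Hom.hom hg).symm⟩
  · intro h f hf
    change r.pres.complex.d (i + 2) (i + 1) ≫ f = 0 at hf
    rw [hd] at hf
    obtain ⟨g, hg⟩ := h (ModuleCat.Hom.hom f) (congrArg ModuleCat.Hom.hom hf)
    refine ⟨(ModuleCat.ofHom g : ModuleCat.of A (r.P i) ⟶ N), ?_⟩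
    change r.pres.complex.d (i + 1) i ≫ ModuleCat.ofHom g = f
    rw [hd]
    exact ModuleCat.hom_ext hg.symm

end Res

section Elementary
variable {A : Type} [CommRing A] {P0 P1 P2 P3 : Type}
  [AddCommGroup P0] [AddCommGroup P1] [AddCommGroup P2] [AddCommGroup P3]
  [Module A P0] [Module A P1] [Module A P2] [Module A P3]
  {d1 : P1 →ₗ[A] P0} {d2 : P2 →ₗ[A] P1} {d3 : P3 →ₗ[A] P2}
  {X Y Z : Type} [AddCommGroup X] [AddCommGroup Y] [AddCommGroup Z]
  [Module A X] [Module A Y] [Module A Z]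

/-- A map killed by the second map of an exact sequence factors through the first. -/
lemma factor_of_exact {Q : Type} [AddCommGroup Q] [Module A Q] {u : X →ₗ[A] Y} {v : Y →ₗ[A] Z}
    (hu : Function.Injective u) (huv : Function.Exact u v) (f : Q →ₗ[A] Y) (hf : v ∘ₗ f = 0) :
    ∃ g : Q →ₗ[A] X, u ∘ₗ g = f := by
  refine ⟨(LinearEquiv.ofInjective u hu).symm.toLinearMap ∘ₗ f.codRestrict (LinearMap.range u) ?_, ?_⟩
  · intro c
    exact (huv (f c)).1 (LinearMap.congr_fun hf c)
  · ext c
    have := LinearEquiv.apply_symm_apply (LinearEquiv.ofInjective u hu)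
      (f.codRestrict (LinearMap.range u) (fun c => (huv (f c)).1 (LinearMap.congr_fun hf c)) c)
    exact congrArg Subtype.val this

lemma EV.quot [Module.Projective A P1] {u : X →ₗ[A] Y} {v : Y →ₗ[A] Z}
    (hu : Function.Injective u) (huv : Function.Exact u v) (hv : Function.Surjective v)
    (hd : d2 ∘ₗ d3 = 0)
    (hX : EV d2 d3 X) (hY : EV d1 d2 Y) : EV d1 d2 Z := by
  intro f hf
  obtain ⟨f', hf'⟩ := Module.projective_lifting_property v f hv
  obtain ⟨h, hh⟩ := factor_of_exact hu huv (f' ∘ₗ d2) (by rw [← LinearMap.comp_assoc, hf', hf])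
  obtain ⟨g, hg⟩ := hX h (by
    ext x
    apply hu
    have := LinearMap.congr_fun hh (d3 x)
    have h2 := LinearMap.congr_fun hd x
    simp only [LinearMap.comp_apply, LinearMap.zero_apply] at this h2 ⊢
    rw [this, h2]; simp)
  obtain ⟨k, hk⟩ := hY (f' - u ∘ₗ g) (by
    rw [LinearMap.sub_comp, LinearMap.comp_assoc, ← hg, hh, sub_self])
  refine ⟨v ∘ₗ k, ?_⟩
  rw [LinearMap.comp_assoc, ← hk, LinearMap.comp_sub, hf', ← LinearMap.comp_assoc,
    huv.linearMap_comp_eq_zero]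
  simp

lemma EV.sub [Module.Projective A P0] {u : X →ₗ[A] Y} {v : Y →ₗ[A] Z}
    (hu : Function.Injective u) (huv : Function.Exact u v) (hv : Function.Surjective v)
    (hd : d1 ∘ₗ d2 = 0)
    (hZ : EV d1 d2 Z) (hY : EV d2 d3 Y) : EV d2 d3 X := by
  intro f hf
  obtain ⟨g, hg⟩ := hY (u ∘ₗ f) (by rw [LinearMap.comp_assoc, hf]; simp)
  obtain ⟨k, hk⟩ := hZ (v ∘ₗ g) (by
    rw [LinearMap.comp_assoc, ← hg, ← LinearMap.comp_assoc, huv.linearMap_comp_eq_zero]; simp)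
  obtain ⟨k', hk'⟩ := Module.projective_lifting_property v k hv
  obtain ⟨l, hl⟩ := factor_of_exact hu huv (g - k' ∘ₗ d1) (by
    rw [LinearMap.comp_sub, hk, ← LinearMap.comp_assoc, hk', sub_self])
  refine ⟨l, ?_⟩
  ext x
  apply hu
  have h1 := LinearMap.congr_fun hl (d2 x)
  have h2 := LinearMap.congr_fun hg x
  have h3 := LinearMap.congr_fun hd x
  simp only [LinearMap.comp_apply, LinearMap.zero_apply, LinearMap.sub_apply] at h1 h2 h3 ⊢
  rw [h1, h2, h3]; simp

lemma EV.pi {k : ℕ} (hX : EV d1 d2 X) : EV d1 d2 (Fin k → X) := by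
  intro f hf
  have : ∀ j, ∃ g : P0 →ₗ[A] X, LinearMap.proj j ∘ₗ f = g ∘ₗ d1 := fun j =>
    hX (LinearMap.proj j ∘ₗ f) (by rw [LinearMap.comp_assoc, hf]; simp)
  choose g hg using this
  refine ⟨LinearMap.pi g, ?_⟩
  ext x j
  exact LinearMap.congr_fun (hg j) x

/-- Nakayama step. -/
lemma EV.nak [IsNoetherianRing A] [Module.Projective A P0] [Module.Free A P1]
    [Module.Finite A P1] [Module.Finite A X]
    {T : A} (hT : T ∈ Ideal.jacobson (⊥ : Ideal A)) (hreg : ∀ x : X, T • x = 0 → x = 0)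
    {v : X →ₗ[A] Z} (hv : Function.Surjective v) (hker : ∀ x, v x = 0 ↔ ∃ y, T • y = x)
    (hd : d1 ∘ₗ d2 = 0)
    (hZ : EV d1 d2 Z) : EV d1 d2 X := by
  let u : X →ₗ[A] X := LinearMap.lsmul A X T
  have hu : Function.Injective u := (injective_iff_map_eq_zero u).2 hreg
  have huv : Function.Exact u v := fun x => hker x
  let Zc : Submodule A (P1 →ₗ[A] X) := LinearMap.ker (LinearMap.lcomp A X d2)
  let B : Submodule A (P1 →ₗ[A] X) := LinearMap.range (LinearMap.lcomp A X d1)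
  have key : Zc ≤ B := by
    refine Submodule.le_of_le_smul_of_le_jacobson_bot (I := Ideal.span {T})
      (IsNoetherian.noetherian _) ?_ ?_
    · rw [Ideal.span_le]; simpa using hT
    · intro f hf
      have hf : f ∘ₗ d2 = 0 := hf
      obtain ⟨k, hk⟩ := hZ (v ∘ₗ f) (by rw [LinearMap.comp_assoc, hf]; simp)
      obtain ⟨k', hk'⟩ := Module.projective_lifting_property v k hv
      obtain ⟨l, hl⟩ := factor_of_exact hu huv (f - k' ∘ₗ d1) (by
        rw [LinearMap.comp_sub, hk, ← LinearMap.comp_assoc, hk', sub_self])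
      have hfe : f = k' ∘ₗ d1 + T • l := by
        have : u ∘ₗ l = T • l := rfl
        rw [← this, hl]; simp
      rw [hfe]
      refine Submodule.add_mem_sup ⟨k', rfl⟩ ?_
      refine Submodule.smul_mem_smul (Ideal.mem_span_singleton_self T) ?_
      change l ∘ₗ d2 = 0
      ext x
      apply hu
      have h1 := LinearMap.congr_fun hl (d2 x)
      have h2 := LinearMap.congr_fun hf x
      have h3 := LinearMap.congr_fun hd x
      simp only [LinearMap.comp_apply, LinearMap.zero_apply, LinearMap.sub_apply] at h1 h2 h3 ⊢
      rw [h1, h2, h3]; simp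
  intro f hf
  obtain ⟨g, hg⟩ := key (show f ∈ Zc from hf)
  exact ⟨g, hg.symm⟩

end Elementary

section Exist
variable {A : Type} [CommRing A] [IsNoetherianRing A]

lemma exists_step {X Y : Type} [AddCommGroup X] [AddCommGroup Y] [Module A X] [Module A Y]
    [Module.Finite A X] (f : X →ₗ[A] Y) :
    ∃ (c : ℕ) (g : (Fin c → A) →ₗ[A] X), Function.Exact g f := by
  obtain ⟨c, g, hg⟩ := Module.Finite.exists_fin' A (LinearMap.ker f)
  refine ⟨c, (LinearMap.ker f).subtype ∘ₗ g, ?_⟩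
  rw [LinearMap.exact_iff, LinearMap.range_comp, LinearMap.range_eq_top.2 hg]
  simp

/-- One stage in the recursive construction of a free resolution. -/
structure Stage (A : Type) [CommRing A] where
  b : ℕ
  a : ℕ
  f : (Fin a → A) →ₗ[A] (Fin b → A)

/-- Next stage. -/
noncomputable def Stage.next (s : Stage A) : Stage A where
  b := s.a
  a := (exists_step s.f).choose
  f := (exists_step s.f).choose_spec.choose

/-- All stages. -/
noncomputable def stages (s : Stage A) : ℕ → Stage A
  | 0 => s
  | n + 1 => (stages s n).next

lemma exists_res (M : Type) [AddCommGroup M] [Module A M] [Module.Finite A M] :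
    ∃ (k : ℕ → ℕ) (d : ∀ n, (Fin (k (n + 1)) → A) →ₗ[A] (Fin (k n) → A))
      (ε : (Fin (k 0) → A) →ₗ[A] M), (∀ n, Function.Exact (d (n + 1)) (d n)) ∧
      Function.Exact (d 0) ε ∧ Function.Surjective ε := by
  obtain ⟨b, ε, hε⟩ := Module.Finite.exists_fin' A M
  obtain ⟨a, f, hf⟩ := exists_step ε
  let s : Stage A := ⟨b, a, f⟩
  refine ⟨fun n => (stages s n).b, fun n => (stages s n).f, ε, ?_, hf, hε⟩
  intro n
  exact (exists_step (stages s n).f).choose_spec.choose_spec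

end Exist

section Transfer
open TensorProduct

/-- Exactness passes to quotients by `T`. -/
lemma quot_exact {A : Type} [CommRing A] {X Y Z X' Y' Z' : Type}
    [AddCommGroup X] [AddCommGroup Y] [AddCommGroup Z]
    [AddCommGroup X'] [AddCommGroup Y'] [AddCommGroup Z']
    [Module A X] [Module A Y] [Module A Z] [Module A X'] [Module A Y'] [Module A Z']
    (T : A) (f : X →ₗ[A] Y) (g : Y →ₗ[A] Z) (f' : X' →ₗ[A] Y') (g' : Y' →ₗ[A] Z')
    (p : X →ₗ[A] X') (q : Y →ₗ[A] Y') (s : Z →ₗ[A] Z')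
    (hp : Function.Surjective p) (hq : Function.Surjective q)
    (hqT : ∀ y, q (T • y) = 0) (hs : ∀ z, s z = 0 → ∃ w, T • w = z)
    (h1 : ∀ x, f' (p x) = q (f x)) (h2 : ∀ y, g' (q y) = s (g y))
    (hfg : Function.Exact f g) (H : ∀ z, T • z ∈ LinearMap.range g → z ∈ LinearMap.range g) :
    Function.Exact f' g' := by
  intro y'
  constructor
  · intro hy
    obtain ⟨y, rfl⟩ := hq y'
    rw [h2] at hy
    obtain ⟨w, hw⟩ := hs _ hy
    obtain ⟨z, hz⟩ := H w ⟨y, hw.symm⟩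
    obtain ⟨x, hx⟩ := (hfg (y - T • z)).1 (by rw [map_sub, map_smul, hz, hw, sub_self])
    refine ⟨p x, ?_⟩
    rw [h1, hx, map_sub, hqT, sub_zero]
  · rintro ⟨x', rfl⟩
    obtain ⟨x, rfl⟩ := hp x'
    rw [h1, h2, hfg.apply_apply_eq_zero, map_zero]

variable {S R : Type} [CommRing S] [CommRing R] [Algebra S R] {T : S}

lemma mk_ker (hsurj : Function.Surjective (algebraMap S R))
    (hker : ∀ s, algebraMap S R s = 0 ↔ ∃ t, T • t = s)
    {P : Type} [AddCommGroup P] [Module S P] (x : P) (hx : (1 : R) ⊗ₜ[S] x = 0) :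
    ∃ y, T • y = x := by
  have hex : Function.Exact (LinearMap.lsmul S S T) (Algebra.linearMap S R) := fun s => hker s
  have := rTensor_exact P hex hsurj
  obtain ⟨w, hw⟩ := (this ((1 : S) ⊗ₜ[S] x)).1 (by simpa using hx)
  refine ⟨TensorProduct.lid S P w, ?_⟩
  have h2 := congrArg (TensorProduct.lid S P) hw
  rw [TensorProduct.lid_tmul, one_smul] at h2
  rw [← h2]
  clear hw h2
  induction w with
  | zero => simp
  | tmul a b => simp [mul_smul]
  | add a b ha hb => rw [map_add, smul_add, ha, hb, map_add, map_add]

lemma mk_surj (hsurj : Function.Surjective (algebraMap S R))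
    {P : Type} [AddCommGroup P] [Module S P] :
    Function.Surjective (TensorProduct.mk S R P 1) := by
  intro w
  induction w with
  | zero => exact ⟨0, by simp⟩
  | tmul a b =>
    obtain ⟨s, rfl⟩ := hsurj a
    exact ⟨s • b, by simp [Algebra.algebraMap_eq_smul_one, TensorProduct.smul_tmul]⟩
  | add a b ha hb =>
    obtain ⟨x, rfl⟩ := ha
    obtain ⟨y, rfl⟩ := hb
    exact ⟨x + y, map_add _ _ _⟩

lemma mk_T (hker : ∀ s, algebraMap S R s = 0 ↔ ∃ t, T • t = s)
    {P : Type} [AddCommGroup P] [Module S P] (y : P) :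
    TensorProduct.mk S R P 1 (T • y) = 0 := by
  have h : algebraMap S R T = 0 := (hker T).2 ⟨1, by simp⟩
  rw [TensorProduct.mk_apply, TensorProduct.tmul_smul, TensorProduct.smul_tmul',
    ← Algebra.algebraMap_eq_smul_one, h, TensorProduct.zero_tmul]

lemma EV.baseChange {P0 P1 P2 : Type}
    [AddCommGroup P0] [AddCommGroup P1] [AddCommGroup P2]
    [Module S P0] [Module S P1] [Module S P2]
    {d1 : P1 →ₗ[S] P0} {d2 : P2 →ₗ[S] P1}
    (N : Type) [AddCommGroup N] [Module R N] [Module S N] [IsScalarTower S R N] :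
    EV (d1.baseChange R) (d2.baseChange R) N ↔ EV d1 d2 N := by
  constructor
  · intro h f hf
    obtain ⟨g, hg⟩ := h (f.liftBaseChange R) (by
      ext x
      simpa using LinearMap.congr_fun hf x)
    refine ⟨(LinearMap.liftBaseChangeEquiv R).symm g, ?_⟩
    ext x
    have := LinearMap.congr_fun hg (1 ⊗ₜ x)
    simpa using this
  · intro h f hf
    obtain ⟨g, hg⟩ := h ((LinearMap.liftBaseChangeEquiv R).symm f) (by
      ext x
      simpa using LinearMap.congr_fun hf (1 ⊗ₜ x))
    refine ⟨g.liftBaseChange R, ?_⟩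
    ext x
    simpa using LinearMap.congr_fun hg x

variable {M Mb : Type} [AddCommGroup M] [Module S M] [AddCommGroup Mb] [Module R Mb] [Module S Mb]
  [IsScalarTower S R Mb]

/-- Reduction of a resolution modulo a regular element. -/
noncomputable def Res.red (r : Res S M) (hsurj : Function.Surjective (algebraMap S R))
    (hker : ∀ s, algebraMap S R s = 0 ↔ ∃ t, T • t = s)
    (hP : ∀ n (x : r.P n), T • x = 0 → x = 0) (hM : ∀ x : M, T • x = 0 → x = 0)
    (v : M →ₗ[S] Mb) (hv : Function.Surjective v) (hvk : ∀ x, v x = 0 ↔ ∃ y, T • y = x) :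
    Res R Mb where
  P n := R ⊗[S] r.P n
  proj n := by
    have := r.proj n
    infer_instance
  d n := (r.d n).baseChange R
  ε := (v ∘ₗ r.ε).liftBaseChange R
  ex n := by
    refine quot_exact T (r.d (n + 1)) (r.d n) (((r.d (n + 1)).baseChange R).restrictScalars S)
      (((r.d n).baseChange R).restrictScalars S)
      (TensorProduct.mk S R _ 1) (TensorProduct.mk S R _ 1) (TensorProduct.mk S R _ 1)
      (mk_surj hsurj) (mk_surj hsurj) (mk_T hker) (mk_ker hsurj hker) (by simp) (by simp)
      (r.ex n) ?_
    intro z hz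
    cases n with
    | zero =>
      obtain ⟨x, hx⟩ := hz
      refine (r.ex0 z).1 (hM _ ?_)
      rw [← map_smul, ← hx, r.ex0.apply_apply_eq_zero]
    | succ n =>
      obtain ⟨x, hx⟩ := hz
      refine (r.ex n z).1 (hP _ _ ?_)
      rw [← map_smul, ← hx, (r.ex n).apply_apply_eq_zero]
  ex0 := by
    refine quot_exact T (r.d 0) r.ε (((r.d 0).baseChange R).restrictScalars S)
      (((v ∘ₗ r.ε).liftBaseChange R).restrictScalars S)
      (TensorProduct.mk S R _ 1) (TensorProduct.mk S R _ 1) v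
      (mk_surj hsurj) (mk_surj hsurj) (mk_T hker) (fun z hz => (hvk z).1 hz) (by simp) (by simp)
      r.ex0 (fun z _ => r.surj z)
  surj x := by
    obtain ⟨y, rfl⟩ := hv x
    obtain ⟨z, rfl⟩ := r.surj y
    exact ⟨1 ⊗ₜ z, by simp⟩

/-- SAC for one module, unpacked. -/
def SACm (A : Type) [CommRing A] (M : Type) [AddCommGroup M] [Module A M] : Prop :=
    (∀ i : ℕ, 0 < i → Subsingleton (ExtGroup A (ModuleCat.of A M) (ModuleCat.of A A) i)) →
    (∃ N : ℕ, ∀ i : ℕ, N < i →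
      Subsingleton (ExtGroup A (ModuleCat.of A M) (ModuleCat.of A M) i)) →
    ∀ i : ℕ, 0 < i → Subsingleton (ExtGroup A (ModuleCat.of A M) (ModuleCat.of A M) i)

lemma SAC_iff (A : Type) [CommRing A] : SAC A ↔
    ∀ (M : Type) [AddCommGroup M] [Module A M], Module.Finite A M → SACm A M :=
  ⟨fun h M _ _ hM => h (ModuleCat.of A M) hM, fun h M hM => h M hM⟩

lemma Res.SACm_iff {A : Type} [CommRing A] {M : Type} [AddCommGroup M] [Module A M]
    (r : Res A M) : SACm A M ↔
    ((∀ i, EV (r.d i) (r.d (i + 1)) A) → (∃ N, ∀ i, N ≤ i → EV (r.d i) (r.d (i + 1)) M) →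
    ∀ i, EV (r.d i) (r.d (i + 1)) M) := by
  have h1 : ∀ (N : Type) [AddCommGroup N] [Module A N],
      (∀ i : ℕ, 0 < i → Subsingleton (ExtGroup A (ModuleCat.of A M) (ModuleCat.of A N) i)) ↔
      ∀ i, EV (r.d i) (r.d (i + 1)) N := by
    intro N _ _
    constructor
    · intro h i
      exact (r.ext_iff (ModuleCat.of A N) i).1 (h (i + 1) (by omega))
    · intro h i hi
      obtain ⟨j, rfl⟩ : ∃ j, i = j + 1 := ⟨i - 1, by omega⟩
      exact (r.ext_iff (ModuleCat.of A N) j).2 (h j)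
  have h2 : (∃ N : ℕ, ∀ i : ℕ, N < i →
      Subsingleton (ExtGroup A (ModuleCat.of A M) (ModuleCat.of A M) i)) ↔
      (∃ N, ∀ i, N ≤ i → EV (r.d i) (r.d (i + 1)) M) := by
    constructor
    · rintro ⟨N, h⟩
      exact ⟨N, fun i hi => (r.ext_iff (ModuleCat.of A M) i).1 (h (i + 1) (by omega))⟩
    · rintro ⟨N, h⟩
      refine ⟨N, fun i hi => ?_⟩
      obtain ⟨j, rfl⟩ : ∃ j, i = j + 1 := ⟨i - 1, by omega⟩
      exact (r.ext_iff (ModuleCat.of A M) j).2 (h j (by omega))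
  rw [SACm, h1 A, h2, h1 M]

lemma pi_reg (hT : ∀ s : S, T • s = 0 → s = 0) {k : ℕ} (x : Fin k → S) (hx : T • x = 0) :
    x = 0 := by
  ext j
  exact hT _ (congrFun hx j)

lemma transfer [IsNoetherianRing S] (hsurj : Function.Surjective (algebraMap S R))
    (hker : ∀ s, algebraMap S R s = 0 ↔ ∃ t, T • t = s)
    (hT : ∀ s : S, T • s = 0 → s = 0) (hJ : T ∈ Ideal.jacobson (⊥ : Ideal S))
    [Module.Finite S M]
    (hM : ∀ x : M, T • x = 0 → x = 0)
    (v : M →ₗ[S] Mb) (hv : Function.Surjective v) (hvk : ∀ x, v x = 0 ↔ ∃ y, T • y = x) :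
    SACm S M ↔ SACm R Mb := by
  obtain ⟨k, d, ε, h1, h2, h3⟩ := exists_res (A := S) M
  let r : Res S M := ⟨fun n => (Fin (k n) → S), fun n => inferInstance, d, ε, h1, h2, h3⟩
  let r' := r.red hsurj hker (fun n x hx => pi_reg hT x hx) hM v hv hvk
  have hdd := r.dd
  rw [r.SACm_iff, r'.SACm_iff]
  have ebc : ∀ (i : ℕ) (N : Type) [AddCommGroup N] [Module R N] [Module S N]
      [IsScalarTower S R N], EV (r'.d i) (r'.d (i + 1)) N ↔ EV (d i) (d (i + 1)) N := by
    intro i N _ _ _ _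
    exact EV.baseChange N
  have quo : ∀ (i : ℕ) (X Z : Type) [AddCommGroup X] [AddCommGroup Z] [Module S X] [Module S Z]
      (_ : ∀ x : X, T • x = 0 → x = 0) (v : X →ₗ[S] Z) (_ : Function.Surjective v)
      (_ : ∀ x, v x = 0 ↔ ∃ y, T • y = x),
      EV (d i) (d (i + 1)) X → EV (d (i + 1)) (d (i + 1 + 1)) X → EV (d i) (d (i + 1)) Z := by
    intro i X Z _ _ _ _ hreg v hv hk e1 e2
    exact EV.quot (u := LinearMap.lsmul S X T) ((injective_iff_map_eq_zero _).2 hreg)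
      (fun x => hk x) hv (hdd (i + 1)) e2 e1
  have nak : ∀ (i : ℕ) (X Z : Type) [AddCommGroup X] [AddCommGroup Z] [Module S X] [Module S Z]
      [Module.Finite S X]
      (_ : ∀ x : X, T • x = 0 → x = 0) (v : X →ₗ[S] Z) (_ : Function.Surjective v)
      (_ : ∀ x, v x = 0 ↔ ∃ y, T • y = x),
      EV (d i) (d (i + 1)) Z → EV (d i) (d (i + 1)) X := by
    intro i X Z _ _ _ _ _ hreg v hv hk e
    exact EV.nak hJ hreg hv hk (hdd i) e
  have cS : (∀ i, EV (r.d i) (r.d (i + 1)) S) ↔ ∀ i, EV (r'.d i) (r'.d (i + 1)) R := by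
    constructor
    · intro h i
      exact (ebc i R).2 (quo i S R hT (Algebra.linearMap S R) hsurj hker (h i) (h (i + 1)))
    · intro h i
      exact nak i S R hT (Algebra.linearMap S R) hsurj hker ((ebc i R).1 (h i))
  have cM1 : ∀ i, EV (r.d i) (r.d (i + 1)) M → EV (r.d (i + 1)) (r.d (i + 1 + 1)) M →
      EV (r'.d i) (r'.d (i + 1)) Mb := fun i e1 e2 => (ebc i Mb).2 (quo i M Mb hM v hv hvk e1 e2)
  have cM2 : ∀ i, EV (r'.d i) (r'.d (i + 1)) Mb → EV (r.d i) (r.d (i + 1)) M :=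
    fun i e => nak i M Mb hM v hv hvk ((ebc i Mb).1 e)
  rw [cS]
  constructor
  · rintro h a ⟨N, b⟩ i
    have := h a ⟨N, fun i hi => cM2 i (b i hi)⟩
    exact cM1 i (this i) (this _)
  · rintro h a ⟨N, b⟩ i
    exact cM2 i (h a ⟨N, fun i hi => cM1 i (b i hi) (b _ (by omega))⟩ i)

/-- Replacing a module by a syzygy. -/
lemma syzygy [IsNoetherianRing S] (M : Type) [AddCommGroup M] [Module S M] [Module.Finite S M] :
    ∃ (k : ℕ) (K : Submodule S (Fin k → S)), SACm S K → SACm S M := by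
  obtain ⟨k, d, ε, h1, h2, h3⟩ := exists_res (A := S) M
  let r : Res S M := ⟨fun n => (Fin (k n) → S), fun n => inferInstance, d, ε, h1, h2, h3⟩
  have hdd : ∀ n, d n ∘ₗ d (n + 1) = 0 := r.dd
  let K := LinearMap.ker ε
  let rK : Res S K := ⟨fun n => (Fin (k (n + 1)) → S), fun n => inferInstance,
    fun n => d (n + 1), (d 0).codRestrict K (fun x => h2.apply_apply_eq_zero x),
    fun n => h1 (n + 1), by
      intro x
      rw [← h1 0 x]
      exact Subtype.ext_iff, by
      rintro ⟨x, hx⟩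
      obtain ⟨y, hy⟩ := (h2 x).1 hx
      exact ⟨y, Subtype.ext hy⟩⟩
  refine ⟨k 0, K, ?_⟩
  rw [r.SACm_iff, rK.SACm_iff]
  have ex : Function.Exact K.subtype ε := by
    rw [LinearMap.exact_iff]; simp [K]
  intro h a ⟨N, b⟩ i
  have aP : ∀ i, EV (d i) (d (i + 1)) (Fin (k 0) → S) := fun i => EV.pi (a i)
  refine EV.quot (d3 := d (i + 1 + 1)) K.subtype_injective ex h3 (hdd _) ?_ (aP i)
  exact h (fun i => a (i + 1)) ⟨N, fun i hi => EV.sub (d1 := d i) K.subtype_injective ex h3 (hdd i)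
    (b i hi) (aP (i + 1))⟩ i

end Transfer

section PS
open TensorProduct PowerSeries
variable (R : Type) [CommRing R]

/-- The `T ↦ 0` algebra structure. -/
noncomputable abbrev ccAlg : Algebra (PowerSeries R) R := (PowerSeries.constantCoeff (R := R)).toAlgebra

/-- Constant coefficient as a linear map. -/
noncomputable def ccLin : PowerSeries R →ₗ[R] R := PowerSeries.coeff 0

/-- Multiplication by the variable. -/
noncomputable def mulX : PowerSeries R →ₗ[R] PowerSeries R :=
  LinearMap.mulLeft R (PowerSeries.X : PowerSeries R)

/-- Shift. -/
noncomputable def shiftX : PowerSeries R →ₗ[R] PowerSeries R where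
  toFun f := PowerSeries.mk fun n => PowerSeries.coeff (n + 1) f
  map_add' f g := by ext; simp
  map_smul' a f := by ext; simp

lemma shift_mul : shiftX R ∘ₗ mulX R = LinearMap.id := by
  ext f n
  simp [shiftX, mulX, PowerSeries.coeff_succ_X_mul]

lemma cc_ker (s : PowerSeries R) : PowerSeries.constantCoeff s = 0 ↔
    ∃ t, (PowerSeries.X : PowerSeries R) • t = s := by
  rw [← PowerSeries.X_dvd_iff]
  exact ⟨fun ⟨t, h⟩ => ⟨t, h.symm⟩, fun ⟨t, h⟩ => ⟨t, h.symm⟩⟩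

lemma X_jac : (PowerSeries.X : PowerSeries R) ∈ Ideal.jacobson (⊥ : Ideal (PowerSeries R)) := by
  rw [Ideal.mem_jacobson_bot]
  intro y
  rw [PowerSeries.isUnit_iff_constantCoeff]
  simp

lemma X_reg (s : PowerSeries R) (h : (PowerSeries.X : PowerSeries R) • s = 0) : s = 0 := by
  have := LinearMap.congr_fun (shift_mul R) s
  rw [LinearMap.comp_apply] at this
  rw [show mulX R s = 0 from h, map_zero] at this
  exact this.symm

lemma X_smul_tensor {M : Type} [AddCommGroup M] [Module R M] (x : PowerSeries R ⊗[R] M) :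
    (PowerSeries.X : PowerSeries R) • x = (mulX R).rTensor M x := by
  induction x with
  | zero => simp
  | tmul a b => simp [mulX, TensorProduct.smul_tmul']
  | add a b ha hb => rw [smul_add, ha, hb, map_add]

end PS

/-- A Noetherian local ring `R` satisfies (SAC) iff the power series ring `R[[T]]`
satisfies (SAC). -/
theorem stmt_6 (R : Type) [CommRing R] [IsNoetherianRing R] [IsLocalRing R] :
    SAC R ↔ SAC (PowerSeries R) := by
  letI : Algebra (PowerSeries R) R := ccAlg R
  have hsurj : Function.Surjective (algebraMap (PowerSeries R) R) := fun a =>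
    ⟨PowerSeries.C a, PowerSeries.constantCoeff_C a⟩
  have hker : ∀ s, algebraMap (PowerSeries R) R s = 0 ↔
    ∃ t, (PowerSeries.X : PowerSeries R) • t = s := cc_ker R
  rw [SAC_iff, SAC_iff]
  constructor
  · intro h M _ _ hM
    obtain ⟨k, K, hK⟩ := syzygy (S := PowerSeries R) M
    apply hK
    let Mb := TensorProduct (PowerSeries R) R K
    have hKreg : ∀ x : K, (PowerSeries.X : PowerSeries R) • x = 0 → x = 0 := fun x hx =>
      Subtype.ext (pi_reg (X_reg R) x.1 (congrArg Subtype.val hx))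
    refine (transfer (Mb := Mb) hsurj hker (X_reg R) (X_jac R) hKreg
      (TensorProduct.mk (PowerSeries R) R K 1) (mk_surj hsurj) (fun x =>
        ⟨mk_ker hsurj hker x, ?_⟩)).2 (h Mb inferInstance)
    rintro ⟨y, rfl⟩
    exact mk_T hker y
  · intro h M _ _ hM
    letI : Module (PowerSeries R) M := Module.compHom M (PowerSeries.constantCoeff (R := R))
    have hsm : ∀ (s : PowerSeries R) (m : M), s • m = PowerSeries.constantCoeff s • m :=
      fun _ _ => rfl
    haveI : IsScalarTower (PowerSeries R) R M := ⟨fun s a m => mul_smul _ a m⟩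
    let v0 : TensorProduct R (PowerSeries R) M →ₗ[R] M :=
      (TensorProduct.lid R M).toLinearMap ∘ₗ (ccLin R).rTensor M
    have hv0 : ∀ (s : PowerSeries R) (m : M), v0 (s ⊗ₜ m) = PowerSeries.constantCoeff s • m := by
      intro s m
      simp [v0, ccLin]
    let v : TensorProduct R (PowerSeries R) M →ₗ[PowerSeries R] M :=
      { v0 with
        map_smul' := by
          intro s x
          change v0 (s • x) = s • v0 x
          induction x with
          | zero => simp
          | tmul a b => rw [TensorProduct.smul_tmul', hv0, hv0, hsm, smul_smul]; simp
          | add a b ha hb => rw [smul_add, map_add, ha, hb, map_add, smul_add] }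
    have hreg : ∀ x : TensorProduct R (PowerSeries R) M,
        (PowerSeries.X : PowerSeries R) • x = 0 → x = 0 := by
      intro x hx
      rw [X_smul_tensor] at hx
      have := LinearMap.congr_fun (congrArg (LinearMap.rTensor M) (shift_mul R)) x
      rw [LinearMap.rTensor_comp, LinearMap.comp_apply, hx, map_zero] at this
      simpa using this.symm
    have hex : Function.Exact (mulX R) (ccLin R) := by
      intro s
      have := cc_ker R s
      rw [← PowerSeries.coeff_zero_eq_constantCoeff_apply] at this
      exact this
    have hsc : Function.Surjective (ccLin R) := fun a => ⟨PowerSeries.C a, by simp [ccLin]⟩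
    have hex2 := rTensor_exact M hex hsc
    refine (transfer (M := TensorProduct R (PowerSeries R) M) hsurj hker (X_reg R) (X_jac R) hreg
      v ?_ ?_).1 (h _ inferInstance)
    · intro m
      refine ⟨1 ⊗ₜ m, ?_⟩
      change v0 _ = _
      rw [hv0]; simp
    · intro x
      change v0 x = 0 ↔ _
      have : v0 x = 0 ↔ (ccLin R).rTensor M x = 0 := by
        simp [v0]
      rw [this, hex2 x]
      exact ⟨fun ⟨y, hy⟩ => ⟨y, (X_smul_tensor R y).trans hy⟩,
        fun ⟨y, hy⟩ => ⟨y, (X_smul_tensor R y).symm.trans hy⟩⟩
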